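/- arXiv:math/0612858 — 4 statements merged into one kernel-verified Lean document; each statement's English description precedes it below -/
import Mathlib

section
/- Character property of the e-actions (axiom (ii) of a geometric crystal, part of Theorem 5.3): for all i, j ∈ {0,1,2} and all c, x0,...,x5 ∈ ℝ_{>0} one has γ_j(e_i^c(x)) = c^{a_{ij}}·γ_j(x), where (a_{ij}) is the Cartan matrix of type G2^(1) with rows (2,-1,0), (-1,2,-1), (0,-3,2). -/
noncomputable section

/-- the action `e1^c` on `(x0,...,x5)` -/
def e1act (c : ℝ) (x : Fin 6 → ℝ) : Fin 6 → ℝ :=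
  let x0 := x 0; let x1 := x 1; let x2 := x 2; let x3 := x 3; let x4 := x 4; let x5 := x 5
  let A1 := x0/x1 + x0*x2^3/(x1^2*x3) + x0*x2^3*x4^3/(x1^2*x3^2*x5)
  let B1 := c*x0/x1 + x0*x2^3/(x1^2*x3) + x0*x2^3*x4^3/(x1^2*x3^2*x5)
  let B3 := c*x0/x1 + c*x0*x2^3/(x1^2*x3) + x0*x2^3*x4^3/(x1^2*x3^2*x5)
  ![x0, (B1/A1)*x1, x2, (B3/B1)*x3, x4, (c*A1/B3)*x5]

/-- the action `e2^c` on `(x0,...,x5)` -/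
def e2act (c : ℝ) (x : Fin 6 → ℝ) : Fin 6 → ℝ :=
  let x0 := x 0; let x1 := x 1; let x2 := x 2; let x3 := x 3; let x4 := x 4; let x5 := x 5
  let A2 := x1/x2 + x1*x3/(x2^2*x4)
  let B2 := c*x1/x2 + x1*x3/(x2^2*x4)
  ![x0, x1, (B2/A2)*x2, x3, (c*A2/B2)*x4, x5]

end

noncomputable section

/-- the action `e0^c` on `(x0,...,x5)` -/
def e0act (c : ℝ) (x : Fin 6 → ℝ) : Fin 6 → ℝ :=
  let x0 := x 0; let x1 := x 1; let x2 := x 2; let x3 := x 3; let x4 := x 4; let x5 := x 5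
  let D := c^2*x0^2*x2^3*x3 + x1*x2^3*x3^2*x5
    + c*x0*(x1*x3^3 + 3*x1*x2*x3^2*x4 + 3*x1*x2^2*x3*x4^2 + x2^3*(x3^2 + x1*x4^3 + x1*x3*x5))
  let E := x0^2*x2^3*x3 + x1*x2^3*x3^2*x5
    + x0*(x1*x3^3 + 3*x1*x2*x3^2*x4 + 3*x1*x2^2*x3*x4^2 + x2^3*(x3^2 + x1*x4^3 + x1*x3*x5))
  let F := c*x0^2*x2^3*x3 + x1*x2^3*x3^2*x5
    + x0*(c*x1*x3^3 + 3*c*x1*x2*x3^2*x4 + 3*c*x1*x2^2*x3*x4^2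
        + x2^3*(x3^2 + c*x1*x4^3 + c*x1*x3*x5))
  let G := c*x0^2*x2^3*x3 + x1*x2^3*x3^2*x5
    + x0*(x1*x3^3 + (2+c)*x1*x2*x3^2*x4 + (1+2*c)*x1*x2^2*x3*x4^2
        + x2^3*(x3^2 + c*x1*x4^3 + c*x1*x3*x5))
  let H := c*x0^2*x2^3*x3 + x1*x2^3*x3^2*x5
    + x0*(x1*x3^3 + 3*x1*x2*x3^2*x4 + 3*x1*x2^2*x3*x4^2 + x2^3*(x3^2 + x1*x4^3 + c*x1*x3*x5))
  ![D/(c*E)*x0, F/(c*E)*x1, G/(c*E)*x2, D*H/(c^2*E*F)*x3, D/(c*G)*x4, D/(c*H)*x5]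

end

noncomputable section

def eps1 (x : Fin 6 → ℝ) : ℝ :=
  x 0/x 1 + x 0*(x 2)^3/((x 1)^2*x 3) + x 0*(x 2)^3*(x 4)^3/((x 1)^2*(x 3)^2*x 5)

def eps2 (x : Fin 6 → ℝ) : ℝ := x 1/x 2 + x 1*x 3/((x 2)^2*x 4)

def eps0 (x : Fin 6 → ℝ) : ℝ :=
  ((x 0)^2*(x 2)^3*x 3 + x 1*(x 2)^3*(x 3)^2*x 5
      + x 0*(x 1*(x 3)^3 + 3*x 1*x 2*(x 3)^2*x 4 + 3*x 1*(x 2)^2*x 3*(x 4)^2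
          + (x 2)^3*((x 3)^2 + x 1*(x 4)^3 + x 1*x 3*x 5)))
    / ((x 0)^3*(x 2)^3*x 3)

def gamma0 (x : Fin 6 → ℝ) : ℝ := (x 0)^2/(x 1*x 3*x 5)

def gamma1 (x : Fin 6 → ℝ) : ℝ := (x 1)^2*(x 3)^2*(x 5)^2/(x 0*(x 2)^3*(x 4)^3)

def gamma2 (x : Fin 6 → ℝ) : ℝ := (x 2)^2*(x 4)^2/(x 1*x 3*x 5)

end

noncomputable section

def eact : Fin 3 → ℝ → (Fin 6 → ℝ) → (Fin 6 → ℝ) := ![e0act, e1act, e2act]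

def gammas : Fin 3 → (Fin 6 → ℝ) → ℝ := ![gamma0, gamma1, gamma2]

/-- the Cartan matrix of type `G2^(1)` -/
def cartanG2 : Matrix (Fin 3) (Fin 3) ℤ := !![2,-1,0; -1,2,-1; 0,-3,2]

end

/-- Each `γ_j` is a monomial in `x0`, `x1*x3*x5` and `x2*x4`, so rescaling these by powers of `c`
rescales the `γ_j` accordingly. -/
theorem gammas_of_scaling {x y : Fin 6 → ℝ} {p q r : ℝ}
    (h0 : y 0 = p * x 0) (hodd : y 1 * y 3 * y 5 = q * (x 1 * x 3 * x 5))
    (heven : y 2 * y 4 = r * (x 2 * x 4)) :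
    gamma0 y = p ^ 2 / q * gamma0 x ∧ gamma1 y = q ^ 2 / (p * r ^ 3) * gamma1 x ∧
      gamma2 y = r ^ 2 / q * gamma2 x := by
  refine ⟨?_, ?_, ?_⟩
  · rw [gamma0, gamma0, hodd, h0, div_mul_div_comm, mul_pow]
  · have hnum : (y 1) ^ 2 * (y 3) ^ 2 * (y 5) ^ 2 =
        q ^ 2 * ((x 1) ^ 2 * (x 3) ^ 2 * (x 5) ^ 2) := by
      rw [← mul_pow, ← mul_pow, hodd]; ring
    have hden : y 0 * (y 2) ^ 3 * (y 4) ^ 3 = p * r ^ 3 * (x 0 * (x 2) ^ 3 * (x 4) ^ 3) := by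
      rw [mul_assoc, ← mul_pow, heven, h0]; ring
    rw [gamma1, gamma1, hnum, hden, div_mul_div_comm]
  · rw [gamma2, gamma2, hodd, ← mul_pow, heven, div_mul_div_comm, mul_pow, mul_pow]

theorem e1act_odd {c : ℝ} (hc : 0 < c) {x : Fin 6 → ℝ} (hx : ∀ k, 0 < x k) :
    e1act c x 1 * e1act c x 3 * e1act c x 5 = c * (x 1 * x 3 * x 5) := by
  have h0 := hx 0; have h1 := hx 1; have h2 := hx 2
  have h3 := hx 3; have h4 := hx 4; have h5 := hx 5
  have key : ∀ A B B' : ℝ, 0 < A → 0 < B → 0 < B' →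
      B / A * x 1 * (B' / B * x 3) * (c * A / B' * x 5) = c * (x 1 * x 3 * x 5) := by
    intro A B B' hA hB hB'
    field_simp
  exact key _ _ _ (by positivity) (by positivity) (by positivity)

theorem e2act_even {c : ℝ} (hc : 0 < c) {x : Fin 6 → ℝ} (hx : ∀ k, 0 < x k) :
    e2act c x 2 * e2act c x 4 = c * (x 2 * x 4) := by
  have h1 := hx 1; have h2 := hx 2; have h3 := hx 3; have h4 := hx 4
  have key : ∀ A B : ℝ, 0 < A → 0 < B →
      B / A * x 2 * (c * A / B * x 4) = c * (x 2 * x 4) := by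
    intro A B hA hB
    field_simp
  exact key _ _ (by positivity) (by positivity)

/-- With `t = D / (c * E)`, the action `e0^c` multiplies `x0`, `x1*x3*x5` and `x2*x4` by `t`,
`t^2 / c^2` and `t / c`. -/
theorem exists_e0act_scaling {c : ℝ} (hc : 0 < c) {x : Fin 6 → ℝ} (hx : ∀ k, 0 < x k) :
    ∃ t : ℝ, 0 < t ∧ e0act c x 0 = t * x 0 ∧
      e0act c x 1 * e0act c x 3 * e0act c x 5 = t ^ 2 / c ^ 2 * (x 1 * x 3 * x 5) ∧
      e0act c x 2 * e0act c x 4 = t / c * (x 2 * x 4) := by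
  have h0 := hx 0; have h1 := hx 1; have h2 := hx 2
  have h3 := hx 3; have h4 := hx 4; have h5 := hx 5
  have key : ∀ D E F G H : ℝ, 0 < D → 0 < E → 0 < F → 0 < G → 0 < H →
      ∃ t : ℝ, 0 < t ∧ D / (c * E) * x 0 = t * x 0 ∧
        F / (c * E) * x 1 * (D * H / (c ^ 2 * E * F) * x 3) * (D / (c * H) * x 5) =
          t ^ 2 / c ^ 2 * (x 1 * x 3 * x 5) ∧
        G / (c * E) * x 2 * (D / (c * G) * x 4) = t / c * (x 2 * x 4) := by
    intro D E F G H hD hE hF hG hH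
    refine ⟨D / (c * E), by positivity, rfl, ?_, ?_⟩ <;> field_simp
  exact key _ _ _ _ _ (by positivity) (by positivity) (by positivity) (by positivity)
    (by positivity)

/-- Character property: `γ_j(e_i^c(x)) = c^{a_{ij}}·γ_j(x)`. -/
theorem gamma_eact (i j : Fin 3) (c : ℝ) (hc : 0 < c) (x : Fin 6 → ℝ) (hx : ∀ k, 0 < x k) :
    gammas j (eact i c x) = c ^ (cartanG2 i j) * gammas j x := by
  obtain ⟨t, ht, ht0, htodd, hteven⟩ := exists_e0act_scaling hc hx
  obtain ⟨h00, h01, h02⟩ := gammas_of_scaling ht0 htodd hteven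
  obtain ⟨h10, h11, h12⟩ := gammas_of_scaling (y := e1act c x) (one_mul (x 0)).symm
    (e1act_odd hc hx) (one_mul (x 2 * x 4)).symm
  obtain ⟨h20, h21, h22⟩ := gammas_of_scaling (y := e2act c x) (one_mul (x 0)).symm
    (one_mul (x 1 * x 3 * x 5)).symm (e2act_even hc hx)
  fin_cases i <;> fin_cases j
  · refine h00.trans (congrArg (· * gamma0 x) (?_ : _ = c ^ (2 : ℤ))); field_simp
  · refine h01.trans (congrArg (· * gamma1 x) (?_ : _ = c ^ (-1 : ℤ))); field_simp
  · refine h02.trans (congrArg (· * gamma2 x) (?_ : _ = c ^ (0 : ℤ))); field_simp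
  · refine h10.trans (congrArg (· * gamma0 x) (?_ : _ = c ^ (-1 : ℤ))); field_simp
  · refine h11.trans (congrArg (· * gamma1 x) (?_ : _ = c ^ (2 : ℤ))); field_simp
  · refine h12.trans (congrArg (· * gamma2 x) (?_ : _ = c ^ (-1 : ℤ))); field_simp
  · refine h20.trans (congrArg (· * gamma0 x) (?_ : _ = c ^ (0 : ℤ))); field_simp
  · refine h21.trans (congrArg (· * gamma1 x) (?_ : _ = c ^ (-3 : ℤ))); field_simp
  · refine h22.trans (congrArg (· * gamma2 x) (?_ : _ = c ^ (2 : ℤ))); field_simp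
end

section
/- Scaling property of the ε-functions (axiom (iv) of a geometric crystal, part of Theorem 5.3): for each i ∈ {0,1,2} and all c, x0,...,x5 ∈ ℝ_{>0} one has ε_i(e_i^c(x)) = c^{-1}·ε_i(x). -/
noncomputable section

def epss : Fin 3 → (Fin 6 → ℝ) → ℝ := ![eps0, eps1, eps2]

end

/-- `ε₀` as a sum of five terms, the last of which is a perfect cube up to a monomial. -/
theorem eps0_eq_sum (x : Fin 6 → ℝ) (hx : ∀ k, 0 < x k) :
    eps0 x = 1 / x 0 + x 1 * x 3 * x 5 / x 0 ^ 3 + x 3 / x 0 ^ 2 + x 1 * x 5 / x 0 ^ 2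
      + x 1 * (x 3 + x 2 * x 4) ^ 3 / (x 0 ^ 2 * x 2 ^ 3 * x 3) := by
  have h0 := (hx 0).ne'
  have h2 := (hx 2).ne'
  have h3 := (hx 3).ne'
  unfold eps0
  field_simp
  ring

theorem eps0_e0act (c : ℝ) (hc : 0 < c) (x : Fin 6 → ℝ) (hx : ∀ k, 0 < x k) :
    eps0 (e0act c x) = c⁻¹ * eps0 x := by
  have h0 := hx 0
  have h1 := hx 1
  have h2 := hx 2
  have h3 := hx 3
  have h4 := hx 4
  have h5 := hx 5
  have hpos : ∀ k, 0 < e0act c x k := by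
    intro k
    fin_cases k <;> simp [e0act] <;> positivity
  rw [eps0_eq_sum _ hpos]
  simp only [e0act, eps0, Matrix.cons_val]
  generalize x 0 = x0 at *
  generalize x 1 = x1 at *
  generalize x 2 = x2 at *
  generalize x 3 = x3 at *
  generalize x 4 = x4 at *
  generalize x 5 = x5 at *
  clear hpos hx
  set D := c^2*x0^2*x2^3*x3 + x1*x2^3*x3^2*x5
    + c*x0*(x1*x3^3 + 3*x1*x2*x3^2*x4 + 3*x1*x2^2*x3*x4^2 + x2^3*(x3^2 + x1*x4^3 + x1*x3*x5))
    with hD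
  set E := x0^2*x2^3*x3 + x1*x2^3*x3^2*x5
    + x0*(x1*x3^3 + 3*x1*x2*x3^2*x4 + 3*x1*x2^2*x3*x4^2 + x2^3*(x3^2 + x1*x4^3 + x1*x3*x5))
    with hE
  set F := c*x0^2*x2^3*x3 + x1*x2^3*x3^2*x5
    + x0*(c*x1*x3^3 + 3*c*x1*x2*x3^2*x4 + 3*c*x1*x2^2*x3*x4^2
        + x2^3*(x3^2 + c*x1*x4^3 + c*x1*x3*x5)) with hF
  set G := c*x0^2*x2^3*x3 + x1*x2^3*x3^2*x5
    + x0*(x1*x3^3 + (2+c)*x1*x2*x3^2*x4 + (1+2*c)*x1*x2^2*x3*x4^2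
        + x2^3*(x3^2 + c*x1*x4^3 + c*x1*x3*x5)) with hG
  set H := c*x0^2*x2^3*x3 + x1*x2^3*x3^2*x5
    + x0*(x1*x3^3 + 3*x1*x2*x3^2*x4 + 3*x1*x2^2*x3*x4^2 + x2^3*(x3^2 + x1*x4^3 + c*x1*x3*x5))
    with hH
  have hD0 : 0 < D := by positivity
  have hE0 : 0 < E := by positivity
  have hF0 : 0 < F := by positivity
  have hG0 : 0 < G := by positivity
  have hH0 : 0 < H := by positivity
  have hGFH : H * x3 + F * (x2 * x4) = G * (x3 + x2 * x4) := by
    rw [hG, hF, hH]; ring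
  have hkey : (c^2*x0^2*x2^3*x3 + x1*x2^3*x3^2*x5) * (F * H) + c*x0*x2^3*x3^2 * H^2
      + c*x0*x1*x2^3*x3*x5 * F^2 + c*x0*x1*(x3 + x2*x4)^3 * (D * E) = D * F * H := by
    rw [hD, hE, hF, hH]; ring
  clear_value D E F G H
  have hsum : D*H/(c^2*E*F)*x3 + G/(c*E)*x2 * (D/(c*G)*x4)
      = D * G * (x3 + x2 * x4) / (c^2*E*F) := by
    rw [mul_assoc D G, ← hGFH]
    field_simp
  rw [hsum]
  clear hsum hGFH hD hE hF hG hH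
  field_simp
  linear_combination hkey

theorem eps1_e1act (c : ℝ) (hc : 0 < c) (x : Fin 6 → ℝ) (hx : ∀ k, 0 < x k) :
    eps1 (e1act c x) = c⁻¹ * eps1 x := by
  have h0 := hx 0
  have h1 := hx 1
  have h2 := hx 2
  have h3 := hx 3
  have h4 := hx 4
  have h5 := hx 5
  simp only [e1act, eps1, Matrix.cons_val]
  field_simp
  ring

theorem eps2_e2act (c : ℝ) (hc : 0 < c) (x : Fin 6 → ℝ) (hx : ∀ k, 0 < x k) :
    eps2 (e2act c x) = c⁻¹ * eps2 x := by
  have h1 := hx 1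
  have h2 := hx 2
  have h3 := hx 3
  have h4 := hx 4
  simp only [e2act, eps2, Matrix.cons_val]
  field_simp

/-- Scaling property: `ε_i(e_i^c(x)) = c⁻¹·ε_i(x)`. -/
theorem eps_eact (i : Fin 3) (c : ℝ) (hc : 0 < c) (x : Fin 6 → ℝ) (hx : ∀ k, 0 < x k) :
    epss i (eact i c x) = c⁻¹ * epss i x := by
  fin_cases i
  · exact eps0_e0act c hc x hx
  · exact eps1_e1act c hc x hx
  · exact eps2_e2act c hc x hx
end

section
/- Lemma 5.1, x-part: in the field K = ℂ(x0,...,x5), write v1(x) = Σ_{i=1}^{6} Xi·bi + Σ_{i=1}^{6} Xi'·bi' + X01·c1 + X02·c2 + X∅·u. Then X1 = 1 + x3/x0 + x1x3^2/(x0x2^3) + 3x1x3x4/(x0x2^2) + 3x1x4^2/(x0x2) + x1x4^3/(x0x3) + (x1/x0 + x1x3/x0^2)x5; X2 = x2^3/x1^2 + x3^2/x2^3 + 3x3x4/x2^2 + 3x4^2/x2 + x4^3/x3 + x5 + x3x5/x0 + (x0x3(2x3+3x2x4) + x2^3(x4^3+x3x5))/(x0x1x3); X3 = x2^2/x1 +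 x3/x2 + x4 + x2x4^2/x0 + x2^2x4^3/(x0x3) + x2^2x5/x0; X4 = x2 + x1x3x4/(x0x2) + 2x1x4^2/x0 + x1x2x4^3/(x0x3) + x1x2x5/x0; X5 = (x2^2/x1 + x3/x2)x4 + 2x4^2 + x2x4^3/x3 + x2x5; X6 = x1 + x1^2x3^2/(x0x2^3) + 3x1^2x3x4/(x0x2^2) + 3x1^2x4^2/(x0x2) + x1^2x4^3/(x0x3) + x1^2x5/x0; X01 = x2x4; X02 = x3 + x1x3^2/x2^3 + 3x1x3x4/x2^2 + 3x1x4^2/x2 + x1x4^3/x3 + x1x5; X6' = x0(x2^3/x1^2 + x3^2/x2^3 + 3x3x4/x2^2 + 3x4^2/x2 + x4^3/x3 + (2x3+3x2x4)/x1 + x5); X5' = x1(x3/x2 + x4); X4' = x0(x2^2/x1 + x3/x2 + x4); X3' = x0x2; X2' = x0x1; X1' = x0^2; X∅ = x0. -/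
noncomputable section

/-- The 15-dimensional space: basis indices 0..5 = b1..b6, 6..11 = b1'..b6',
12 = c1, 13 = c2, 14 = u. -/
abbrev VK (K : Type*) := Fin 15 → K

variable {K : Type*} [Field K]

def f0op (v : VK K) : VK K :=
  ![v 13 + 2*v 14, v 11, v 9, v 8, 0, v 7, 0, 0, 0, 0, 0, 0, 0, 0, v 6]

def f1op (v : VK K) : VK K :=
  ![0, v 0, 0, 0, v 3, 0, v 7, 0, 0, v 10, 0, 3*v 12 + 2*v 13 + v 14, 0, v 5, 0]

def f2op (v : VK K) : VK K :=
  ![0, 0, v 1, 2*v 2, 0, 3*v 3, 0, 3*v 8, 2*v 9, v 11, 2*v 12 + v 13, 0, v 4, 0, 0]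

def wtv : Fin 15 → Fin 3 → ℤ :=
  ![![-2,1,0], ![-1,-1,3], ![-1,0,1], ![-1,1,-1], ![0,-1,2], ![-1,2,-3],
    ![2,-1,0], ![1,1,-3], ![1,0,-1], ![1,-1,1], ![0,1,-2], ![1,-2,3],
    ![0,0,0], ![0,0,0], ![0,0,0]]

/-- the diagonal operator `αi^∨(c)`, multiplying a basis vector `b` by `c^(wt(b)_i)`. -/
def alphaop (i : Fin 3) (c : K) (v : VK K) : VK K := fun k => c ^ (wtv k i) * v k

/-- `Y_0(c) = (1 + f0/c + f0^2/(2c^2)) ∘ α0^∨(c)` -/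
def Y0op (c : K) (v : VK K) : VK K :=
  fun k => alphaop 0 c v k + f0op (alphaop 0 c v) k / c + f0op (f0op (alphaop 0 c v)) k / (2*c^2)

/-- `Y_1(c) = (1 + f1/c + f1^2/(2c^2)) ∘ α1^∨(c)` -/
def Y1op (c : K) (v : VK K) : VK K :=
  fun k => alphaop 1 c v k + f1op (alphaop 1 c v) k / c + f1op (f1op (alphaop 1 c v)) k / (2*c^2)

/-- `Y_2(c) = (1 + f2/c + f2^2/(2c^2) + f2^3/(6c^3)) ∘ α2^∨(c)` -/
def Y2op (c : K) (v : VK K) : VK K :=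
  fun k => alphaop 2 c v k + f2op (alphaop 2 c v) k / c + f2op (f2op (alphaop 2 c v)) k / (2*c^2)
    + f2op (f2op (f2op (alphaop 2 c v))) k / (6*c^3)

/-- `v1(x) = Y_0(x0)Y_1(x1)Y_2(x2)Y_1(x3)Y_2(x4)Y_1(x5)·b1` -/
def v1vec (x0 x1 x2 x3 x4 x5 : K) : VK K :=
  Y0op x0 (Y1op x1 (Y2op x2 (Y1op x3 (Y2op x4 (Y1op x5 (Pi.single 0 1))))))

/-- `v2(y) = Y_2(y2)Y_1(y1)Y_2(y4)Y_1(y3)Y_0(y0)Y_1(y5)·b2'` -/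
def v2vec (y0 y1 y2 y3 y4 y5 : K) : VK K :=
  Y2op y2 (Y1op y1 (Y2op y4 (Y1op y3 (Y0op y0 (Y1op y5 (Pi.single 7 1))))))

end

/-- Coordinates of `Y_0(c) v`. -/
theorem Y0op_apply (c : ℂ) (hc : c ≠ 0) (v : VK ℂ) :
    Y0op c v = ![v 0/c^2 + v 13/c + 2*v 14/c + v 6, v 1/c + v 11, v 2/c + v 9, v 3/c + v 8,
      v 4, v 5/c + v 7, c^2*v 6, c*v 7, c*v 8, c*v 9, v 10, c*v 11, v 12, v 13,
      v 14 + c*v 6] := by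
  ext k
  fin_cases k <;> simp [Y0op, f0op, alphaop, wtv, zpow_neg, zpow_ofNat] <;> field_simp <;> ring

/-- Coordinates of `Y_1(c) v`. -/
theorem Y1op_apply (c : ℂ) (hc : c ≠ 0) (v : VK ℂ) :
    Y1op c v = ![c*v 0, v 1/c + v 0, v 2, c*v 3, v 4/c + v 3, c^2*v 5, v 6/c + v 7, c*v 7, v 8,
      v 9/c + v 10, c*v 10, v 11/c^2 + (3*v 12 + 2*v 13 + v 14)/c + v 5, v 12, v 13 + c*v 5,
      v 14] := by
  ext k
  fin_cases k <;> simp [Y1op, f1op, alphaop, wtv, zpow_neg, zpow_ofNat] <;> field_simp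

/-- Coordinates of `Y_2(c) v`. -/
theorem Y2op_apply (c : ℂ) (hc : c ≠ 0) (v : VK ℂ) :
    Y2op c v = ![v 0, c^3*v 1, c*v 2 + c^2*v 1, v 3/c + 2*v 2 + c*v 1, c^2*v 4,
      v 5/c^3 + 3*v 3/c^2 + 3*v 2/c + v 1, v 6, v 7/c^3 + 3*v 8/c^2 + 3*v 9/c + v 11,
      v 8/c + 2*v 9 + c*v 11, c*v 9 + c^2*v 11, v 10/c^2 + (2*v 12 + v 13)/c + v 4,
      c^3*v 11, v 12 + c*v 4, v 13, v 14] := by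
  ext k
  fin_cases k <;> simp [Y2op, f2op, alphaop, wtv, zpow_neg, zpow_ofNat] <;> field_simp <;> ring

/-- Lemma 5.1, `x`-part: the coefficients of `v1(x)` in the basis
`(b1,...,b6,b1',...,b6',c1,c2,u)`. -/
theorem v1_coefficients (x0 x1 x2 x3 x4 x5 : ℂ) (h0 : x0 ≠ 0) (h1 : x1 ≠ 0) (h2 : x2 ≠ 0) (h3 : x3 ≠ 0) (h4 : x4 ≠ 0) (h5 : x5 ≠ 0) :
    v1vec x0 x1 x2 x3 x4 x5 =
      ![1 + x3/x0 + x1*x3^2/(x0*x2^3) + 3*x1*x3*x4/(x0*x2^2) + 3*x1*x4^2/(x0*x2)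
          + x1*x4^3/(x0*x3) + (x1/x0 + x1*x3/x0^2)*x5,
        x2^3/x1^2 + x3^2/x2^3 + 3*x3*x4/x2^2 + 3*x4^2/x2 + x4^3/x3 + x5 + x3*x5/x0
          + (x0*x3*(2*x3 + 3*x2*x4) + x2^3*(x4^3 + x3*x5))/(x0*x1*x3),
        x2^2/x1 + x3/x2 + x4 + x2*x4^2/x0 + x2^2*x4^3/(x0*x3) + x2^2*x5/x0,
        x2 + x1*x3*x4/(x0*x2) + 2*x1*x4^2/x0 + x1*x2*x4^3/(x0*x3) + x1*x2*x5/x0,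
        (x2^2/x1 + x3/x2)*x4 + 2*x4^2 + x2*x4^3/x3 + x2*x5,
        x1 + x1^2*x3^2/(x0*x2^3) + 3*x1^2*x3*x4/(x0*x2^2) + 3*x1^2*x4^2/(x0*x2)
          + x1^2*x4^3/(x0*x3) + x1^2*x5/x0,
        x0^2,
        x0*x1,
        x0*x2,
        x0*(x2^2/x1 + x3/x2 + x4),
        x1*(x3/x2 + x4),
        x0*(x2^3/x1^2 + x3^2/x2^3 + 3*x3*x4/x2^2 + 3*x4^2/x2 + x4^3/x3
          + (2*x3 + 3*x2*x4)/x1 + x5),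
        x2*x4,
        x3 + x1*x3^2/x2^3 + 3*x1*x3*x4/x2^2 + 3*x1*x4^2/x2 + x1*x4^3/x3 + x1*x5,
        x0] := by
  rw [v1vec, Y1op_apply x5 h5, Y2op_apply x4 h4, Y1op_apply x3 h3, Y2op_apply x2 h2,
    Y1op_apply x1 h1, Y0op_apply x0 h0]
  ext k
  fin_cases k <;> simp [-mul_eq_mul_left_iff] <;> field_simp <;> ring
end

section
/- Lemma 5.1, y-part: in the field ℂ(y0,...,y5), write v2(y) = Σ_{i=1}^{6} Yi·bi + Σ_{i=1}^{6} Yi'·bi' + Y01·c1 + Y02·c2 + Y∅·u. Then Y1 = y1y3; Y2 = y2^3(y1y3 + y4^3)/y1; Y3 = y2^2y3 + y2y4^2 + y2^2y4^3/y1; Y4 = y2y3 + y1y4/y2 + 2y4^2 + y2y4^3/y1; Y5 = y2^2y4; Y6 = y3 + 3y1y4/y2^2 + 3y4^2/y2 + y4^3/y1 + y1^2(y4^3 + y3^2y5)/(y2^3y4^3); Y01 = y2y4; Y02 = y1 + (y3 + y1y3^2/y4^3)y5; Y6' = y2^3 + y0(y2^3/y1 + y2^3y4^3/(y1^2y3))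 + (2y2^3y3/y1 + y2^3y3^2/y4^3 + y2^3y4^3/y1^2)y5; Y5' = y1/y2 + y4 + (y3(1/y2 + y1/(y2^2y4)) + y1y3^2/(y2y4^3))y5; Y4' = y2^2 + y0(y2^2/y1 + y2y4^2/(y1y3) + y2^2y4^3/(y1^2y3)) + (y3(2y2^2/y1 + y2/y4) + y2^2y3^2/y4^3 + y2y4^2/y1 + y2^2y4^3/y1^2)y5; Y3' = y2 + y0(y2/y1 + y4/(y2y3) + 2y4^2/(y1y3) + y2y4^3/(y1^2y3)) + (y3(2y2/y1 + 2/y4) + y2y3^2/y4^3 + y4/y2 + 2y4^2/y1 + y2y4^3/y1^2)y5; Y2' = 1 + y0(1/y1 + y1/(y2^3y3) + 3y4/(y2^2y3) + 3y4^2/(y1y2y3) + y4^3/(y1^2y3)) + (y1/y2^3 + y3(2/y1 + 3/(y2y4)) + y0y1y3/(y2^3y4^3) + y3^2/y4^3 + 3y4/y2^2 + 3y4^2/(y1y2) + y4^3/y1^2)y5; Y1' = y0^2/(y1y3) + y5 + y0(1/y3 + y5/y1 + y3y5/y4^3); Y∅ = y0. -/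
/-- The operator `Y_0(c)` in coordinates. -/
lemma Y0op_eq {K : Type*} [Field K] [CharZero K] {c : K} (hc : c ≠ 0) (v : VK K) :
    Y0op c v =
      ![v 0 / c ^ 2 + (v 13 + 2 * v 14) / c + v 6, v 1 / c + v 11, v 2 / c + v 9,
        v 3 / c + v 8, v 4, v 5 / c + v 7, c ^ 2 * v 6, c * v 7, c * v 8, c * v 9,
        v 10, c * v 11, v 12, v 13, v 14 + c * v 6] := by
  funext k
  fin_cases k <;> simp [Y0op, f0op, alphaop, wtv, zpow_neg] <;> field_simp

/-- The operator `Y_1(c)` in coordinates. -/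
lemma Y1op_eq {K : Type*} [Field K] [CharZero K] {c : K} (hc : c ≠ 0) (v : VK K) :
    Y1op c v =
      ![c * v 0, v 1 / c + v 0, v 2, c * v 3, v 4 / c + v 3, c ^ 2 * v 5,
        v 6 / c + v 7, c * v 7, v 8, v 9 / c + v 10, c * v 10,
        v 11 / c ^ 2 + (3 * v 12 + 2 * v 13 + v 14) / c + v 5, v 12, v 13 + c * v 5,
        v 14] := by
  funext k
  fin_cases k <;> simp [Y1op, f1op, alphaop, wtv, zpow_neg] <;> field_simp

/-- The operator `Y_2(c)` in coordinates. -/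
lemma Y2op_eq {K : Type*} [Field K] [CharZero K] {c : K} (hc : c ≠ 0) (v : VK K) :
    Y2op c v =
      ![v 0, c ^ 3 * v 1, c * v 2 + c ^ 2 * v 1, v 3 / c + 2 * v 2 + c * v 1,
        c ^ 2 * v 4, v 5 / c ^ 3 + 3 * v 3 / c ^ 2 + 3 * v 2 / c + v 1, v 6,
        v 7 / c ^ 3 + 3 * v 8 / c ^ 2 + 3 * v 9 / c + v 11,
        v 8 / c + 2 * v 9 + c * v 11, c * v 9 + c ^ 2 * v 11,
        v 10 / c ^ 2 + (2 * v 12 + v 13) / c + v 4, c ^ 3 * v 11, v 12 + c * v 4, v 13,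
        v 14] := by
  funext k
  fin_cases k <;> simp [Y2op, f2op, alphaop, wtv, zpow_neg] <;> field_simp <;> try ring

/-- The vector `Y_2(y4)Y_1(y3)Y_0(y0)Y_1(y5)·b2'` in coordinates. -/
lemma Y2op_Y1op_Y0op_Y1op_single {K : Type*} [Field K] [CharZero K] {y0 y3 y4 y5 : K}
    (h0 : y0 ≠ 0) (h3 : y3 ≠ 0) (h4 : y4 ≠ 0) (h5 : y5 ≠ 0) :
    Y2op y4 (Y1op y3 (Y0op y0 (Y1op y5 (Pi.single 7 1)))) =
      ![y3, y4 ^ 3, y4 ^ 2, y4, 0, y3 ^ 2 * y5 / y4 ^ 3 + 1, y0 ^ 2 / y3 + y0 * y5,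
        y0 * y3 * y5 / y4 ^ 3 + y0 / y3 + y5, y4 * (y0 / y3 + y5), y4 ^ 2 * (y0 / y3 + y5),
        y3 * y5 / y4, y4 ^ 3 * (y0 / y3 + y5), 0, y3 * y5, y0] := by
  rw [Y1op_eq h5, Y0op_eq h0, Y1op_eq h3, Y2op_eq h4]
  funext k
  fin_cases k <;> simp <;> field_simp <;> try ring

set_option maxHeartbeats 1000000 in
/-- Lemma 5.1, `y`-part: the coefficients of `v2(y)` in the basis
`(b1,...,b6,b1',...,b6',c1,c2,u)`. -/
theorem v2_coefficients (y0 y1 y2 y3 y4 y5 : ℂ)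
    (h0 : y0 ≠ 0) (h1 : y1 ≠ 0) (h2 : y2 ≠ 0) (h3 : y3 ≠ 0) (h4 : y4 ≠ 0) (h5 : y5 ≠ 0) :
    v2vec y0 y1 y2 y3 y4 y5 =
      ![y1*y3,
        y2^3*(y1*y3 + y4^3)/y1,
        y2^2*y3 + y2*y4^2 + y2^2*y4^3/y1,
        y2*y3 + y1*y4/y2 + 2*y4^2 + y2*y4^3/y1,
        y2^2*y4,
        y3 + 3*y1*y4/y2^2 + 3*y4^2/y2 + y4^3/y1 + y1^2*(y4^3 + y3^2*y5)/(y2^3*y4^3),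
        y0^2/(y1*y3) + y5 + y0*(1/y3 + y5/y1 + y3*y5/y4^3),
        1 + y0*(1/y1 + y1/(y2^3*y3) + 3*y4/(y2^2*y3) + 3*y4^2/(y1*y2*y3) + y4^3/(y1^2*y3))
          + (y1/y2^3 + y3*(2/y1 + 3/(y2*y4)) + y0*y1*y3/(y2^3*y4^3) + y3^2/y4^3
              + 3*y4/y2^2 + 3*y4^2/(y1*y2) + y4^3/y1^2)*y5,
        y2 + y0*(y2/y1 + y4/(y2*y3) + 2*y4^2/(y1*y3) + y2*y4^3/(y1^2*y3))
          + (y3*(2*y2/y1 + 2/y4) + y2*y3^2/y4^3 + y4/y2 + 2*y4^2/y1 + y2*y4^3/y1^2)*y5,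
        y2^2 + y0*(y2^2/y1 + y2*y4^2/(y1*y3) + y2^2*y4^3/(y1^2*y3))
          + (y3*(2*y2^2/y1 + y2/y4) + y2^2*y3^2/y4^3 + y2*y4^2/y1 + y2^2*y4^3/y1^2)*y5,
        y1/y2 + y4 + (y3*(1/y2 + y1/(y2^2*y4)) + y1*y3^2/(y2*y4^3))*y5,
        y2^3 + y0*(y2^3/y1 + y2^3*y4^3/(y1^2*y3))
          + (2*y2^3*y3/y1 + y2^3*y3^2/y4^3 + y2^3*y4^3/y1^2)*y5,
        y2*y4,
        y1 + (y3 + y1*y3^2/y4^3)*y5,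
        y0] := by
  rw [v2vec, Y2op_Y1op_Y0op_Y1op_single h0 h3 h4 h5, Y1op_eq h1, Y2op_eq h2]
  funext k
  fin_cases k <;> simp <;> field_simp <;> try ring
end
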